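/- arXiv:2110.14176 — 2 statements merged into one kernel-verified Lean document; each statement's English description precedes it below -/
import Mathlib

section
/- Let (G,ω) be a weighted signed graph. Then g_{01}(EDC(G,ω)) = g_{01}(G,ω), g_{10}(EDC(G,ω)) = g_{11}(G,ω) + 1, and g_{11}(EDC(G,ω)) = g_{10}(G,ω) + 1 (with the convention ∞ + 1 = ∞). -/
open SimpleGraph

namespace SignedPaper

variable {V : Type*} {W : Type*}

/-- The product of the signs (values of `σ`) along the darts of a walk. -/
def walkSign {G : SimpleGraph V} (σ : V → V → ℤ) {a b : V} (w : G.Walk a b) : ℤ :=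
  (w.darts.map fun d => σ d.toProd.1 d.toProd.2).prod

/-- The length of a walk in a weighted signed graph: the sum of the absolute
values of the weights of its edges, with multiplicity. -/
def walkWLen {G : SimpleGraph V} (ω : V → V → ℤ) {a b : V} (w : G.Walk a b) : ℕ :=
  (w.darts.map fun d => (ω d.toProd.1 d.toProd.2).natAbs).sum

/-- Walk-girth of type `ij` of a signed graph: the length of a shortest closed walk
which is negative iff `neg` and of odd length iff `odd` (`⊤` if none exists). -/
noncomputable def sGirth (G : SimpleGraph V) (σ : V → V → ℤ) (neg odd : Bool) : ℕ∞ :=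
  sInf {n : ℕ∞ | ∃ (a : V) (w : G.Walk a a), (w.length : ℕ∞) = n ∧
    (walkSign σ w < 0 ↔ neg = true) ∧ (Odd w.length ↔ odd = true)}

/-- Walk-girth of type `ij` of a weighted signed graph. -/
noncomputable def wGirth (G : SimpleGraph V) (ω : V → V → ℤ) (neg odd : Bool) : ℕ∞ :=
  sInf {n : ℕ∞ | ∃ (a : V) (w : G.Walk a a), (walkWLen ω w : ℕ∞) = n ∧
    (walkSign ω w < 0 ↔ neg = true) ∧ (Odd (walkWLen ω w) ↔ odd = true)}

/-- A graph homomorphism is a homomorphism of signed graphs if it preserves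
the signs of all closed walks. -/
def IsSignedHom {G : SimpleGraph V} {H : SimpleGraph W} (σ : V → V → ℤ) (π : W → W → ℤ)
    (f : G →g H) : Prop :=
  ∀ (a : V) (w : G.Walk a a), walkSign π (w.map f) = walkSign σ w

/-- A signed graph is `g`-wide if it has no positive closed walk of odd length, and
every negative closed walk has length at least `g` and of the same parity as `g`. -/
def gWide (G : SimpleGraph V) (σ : V → V → ℤ) (g : ℕ) : Prop :=
  (∀ (a : V) (w : G.Walk a a), 0 < walkSign σ w → ¬ Odd w.length) ∧
  (∀ (a : V) (w : G.Walk a a), walkSign σ w < 0 → g ≤ w.length ∧ (Odd w.length ↔ Odd g))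

open Classical in
/-- The algebraic distance between two vertices of a signed graph. -/
noncomputable def adist (G : SimpleGraph V) (σ : V → V → ℤ) (u v : V) : ℤ :=
  if ∃ w : G.Walk u v, w.IsPath ∧ w.length = G.dist u v ∧ 0 < walkSign σ w
  then (G.dist u v : ℤ) else -(G.dist u v : ℤ)

/-- The underlying graph of the Extended Double Cover of a signed graph:
`(v, true)` plays the role of `v⁺` and `(v, false)` of `v⁻`. -/
def EDCsg (G : SimpleGraph V) (σ : V → V → ℤ) (hσ : ∀ u v, σ u v = σ v u) :
    SimpleGraph (V × Bool) where
  Adj x y := (x.1 = y.1 ∧ x.2 ≠ y.2) ∨ (G.Adj x.1 y.1 ∧ (x.2 = y.2 ↔ 0 < σ x.1 y.1))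
  symm := .mk fun x y h => by
    rcases h with ⟨h1, h2⟩ | ⟨ha, hb⟩
    · exact Or.inl ⟨h1.symm, h2.symm⟩
    · refine Or.inr ⟨ha.symm, ?_⟩
      rw [hσ y.1 x.1, eq_comm]
      exact hb
  loopless := .mk fun x h => by
    rcases h with ⟨-, h⟩ | ⟨h, -⟩
    · exact h rfl
    · exact G.loopless.irrefl _ h

open Classical in
/-- The signature of the Extended Double Cover: edges `v⁺v⁻` are negative,
all other edges are positive. -/
noncomputable def edcSign : V × Bool → V × Bool → ℤ := fun x y =>
  if x.1 = y.1 then -1 else 1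

/-- The underlying graph of the Extended Double Cover of a weighted signed graph. -/
def EDCw (G : SimpleGraph V) : SimpleGraph (V × Bool) where
  Adj x y := (x.1 = y.1 ∧ x.2 ≠ y.2) ∨ G.Adj x.1 y.1
  symm := .mk fun x y h => by
    rcases h with ⟨h1, h2⟩ | h
    · exact Or.inl ⟨h1.symm, h2.symm⟩
    · exact Or.inr h.symm
  loopless := .mk fun x h => by
    rcases h with ⟨-, h⟩ | h
    · exact h rfl
    · exact G.loopless.irrefl _ h

open Classical in
/-- The weights of the Extended Double Cover of a weighted signed graph `(G, ω)`. -/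
noncomputable def EDCwWeight (ω : V → V → ℤ) : V × Bool → V × Bool → ℤ := fun x y =>
  if x.1 = y.1 then -1
  else if x.2 = y.2 then (if 0 < ω x.1 y.1 then ω x.1 y.1 else ω x.1 y.1 - 1)
  else (if 0 < ω x.1 y.1 then -(ω x.1 y.1 + 1) else -(ω x.1 y.1))

/-- `G` has a `K₄`-minor: there are four disjoint nonempty connected branch sets,
pairwise joined by an edge. -/
def HasK4Minor (G : SimpleGraph V) : Prop :=
  ∃ S : Fin 4 → Set V,
    (∀ i, (G.induce (S i)).Connected) ∧
    (∀ i j, i ≠ j → Disjoint (S i) (S j)) ∧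
    (∀ i j, i ≠ j → ∃ u ∈ S i, ∃ v ∈ S j, G.Adj u v)

/-- A signed graph `(B, π)` is SP-complete if every connected signed graph whose
underlying graph is finite and `K₄`-minor-free and which satisfies the conclusion of
the no-homomorphism lemma with respect to `(B, π)` admits a homomorphism to `(B, π)`. -/
def SPComplete (B : SimpleGraph W) (π : W → W → ℤ) : Prop :=
  ∀ (V' : Type) (G : SimpleGraph V') (σ : V' → V' → ℤ),
    Finite V' → (∀ u v, σ u v = σ v u) →
    (∀ u v, G.Adj u v → σ u v = 1 ∨ σ u v = -1) →
    G.Connected → ¬ HasK4Minor G →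
    (∀ neg odd : Bool, sGirth B π neg odd ≤ sGirth G σ neg odd) →
    ∃ f : G →g B, IsSignedHom σ π f

/-- The cylinder `C_{2a} □ P_b` on vertex set `{0,…,2a-1} × {0,…,b-1}`. -/
def cylT (a b : ℕ) : SimpleGraph (Fin (2 * a) × Fin b) where
  Adj x y := (x.1 = y.1 ∧ ((x.2.val : ℤ) - (y.2.val : ℤ)).natAbs = 1) ∨
    (x.2 = y.2 ∧ (((x.1.val : ℤ) - (y.1.val : ℤ)).natAbs = 1 ∨
      ((x.1.val : ℤ) - (y.1.val : ℤ)).natAbs = 2 * a - 1))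
  symm := .mk fun x y h => by
    rcases h with ⟨h1, h2⟩ | ⟨h1, h2 | h2⟩
    · exact Or.inl ⟨h1.symm, by omega⟩
    · exact Or.inr ⟨h1.symm, Or.inl (by omega)⟩
    · exact Or.inr ⟨h1.symm, Or.inr (by omega)⟩
  loopless := .mk fun x h => by
    have hpos : 0 < 2 * a := x.1.pos
    rcases h with ⟨-, h⟩ | ⟨-, h | h⟩ <;> omega

/-- Two vertices of the cylinder are antipodal if `|Δi| + |Δj| = a + b - 1`. -/
def antip (a b : ℕ) (x y : Fin (2 * a) × Fin b) : Prop :=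
  ((x.1.val : ℤ) - (y.1.val : ℤ)).natAbs + ((x.2.val : ℤ) - (y.2.val : ℤ)).natAbs = a + b - 1

/-- The twisted tube: the cylinder together with the antipodal edges `J`. -/
def twistedTube (a b : ℕ) : SimpleGraph (Fin (2 * a) × Fin b) where
  Adj x y := (cylT a b).Adj x y ∨ (x ≠ y ∧ antip a b x y)
  symm := .mk fun x y h => by
    rcases h with h | ⟨hne, h⟩
    · exact Or.inl ((cylT a b).symm.symm _ _ h)
    · refine Or.inr ⟨hne.symm, ?_⟩
      unfold antip at h ⊢
      omega
  loopless := .mk fun x h => by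
    rcases h with h | ⟨hne, -⟩
    · exact (cylT a b).loopless.irrefl x h
    · exact hne rfl

/-- The signature of the twisted tube: antipodal edges (the set `J`) are negative,
all other edges are positive. -/
def ttSign (a b : ℕ) (x y : Fin (2 * a) × Fin b) : ℤ :=
  if ((x.1.val : ℤ) - (y.1.val : ℤ)).natAbs + ((x.2.val : ℤ) - (y.2.val : ℤ)).natAbs
      = a + b - 1 then -1 else 1

/-- The underlying graph of the signed projective cube `SPC(k)`: vertices are elements
of `ℤ₂^k`, adjacent if they differ in exactly one coordinate or in all coordinates. -/
def spcGraph (k : ℕ) : SimpleGraph (Fin k → ZMod 2) where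
  Adj x y := x ≠ y ∧ (hammingDist x y = 1 ∨ hammingDist x y = k)
  symm := .mk fun x y h => ⟨h.1.symm, by rw [hammingDist_comm]; exact h.2⟩
  loopless := .mk fun x h => h.1 rfl

/-- The signature of `SPC(k)`: an edge is negative iff its endpoints differ in
all coordinates. -/
def spcSign (k : ℕ) (x y : Fin k → ZMod 2) : ℤ :=
  if hammingDist x y = k then -1 else 1

lemma spcSign_symm (k : ℕ) : ∀ x y : Fin k → ZMod 2, spcSign k x y = spcSign k y x := by
  intro x y
  unfold spcSign
  rw [hammingDist_comm]

/-- The function `f_g`. -/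
def fg (g : ℕ) (x : ℤ) : ℤ := if 0 < x then x else (g : ℤ) + x

/-- `(G, σ)` is (a realization of) the signed graph `T_g(p,q,r)`: three distinguished
vertices `x, y, z` joined by six internally disjoint paths of prescribed lengths and
signs, whose edges exhaust `G`. -/
def IsTgpqr (G : SimpleGraph V) (σ : V → V → ℤ) (g : ℕ) (p q r : ℤ) : Prop :=
  ∃ (x y z : V) (P1 P2 : G.Walk x y) (Q1 Q2 : G.Walk y z) (R1 R2 : G.Walk z x),
    x ≠ y ∧ y ≠ z ∧ z ≠ x ∧
    P1.IsPath ∧ P2.IsPath ∧ Q1.IsPath ∧ Q2.IsPath ∧ R1.IsPath ∧ R2.IsPath ∧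
    P1.length = p.natAbs ∧ P2.length = g - p.natAbs ∧
    Q1.length = q.natAbs ∧ Q2.length = g - q.natAbs ∧
    R1.length = r.natAbs ∧ R2.length = g - r.natAbs ∧
    walkSign σ P1 = Int.sign p ∧ walkSign σ P2 = -Int.sign p ∧
    walkSign σ Q1 = Int.sign q ∧ walkSign σ Q2 = -Int.sign q ∧
    walkSign σ R1 = Int.sign r ∧ walkSign σ R2 = -Int.sign r ∧
    (∀ e ∈ G.edgeSet, e ∈ P1.edges ∨ e ∈ P2.edges ∨ e ∈ Q1.edges ∨ e ∈ Q2.edges ∨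
      e ∈ R1.edges ∨ e ∈ R2.edges) ∧
    (∀ i j : Fin 6, i ≠ j → ∀ v : V,
      v ∈ (![{v | v ∈ P1.support}, {v | v ∈ P2.support}, {v | v ∈ Q1.support},
            {v | v ∈ Q2.support}, {v | v ∈ R1.support}, {v | v ∈ R2.support}] : Fin 6 → Set V) i →
      v ∈ (![{v | v ∈ P1.support}, {v | v ∈ P2.support}, {v | v ∈ Q1.support},
            {v | v ∈ Q2.support}, {v | v ∈ R1.support}, {v | v ∈ R2.support}] : Fin 6 → Set V) j →
      v = x ∨ v = y ∨ v = z)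

/-
Put each walk of the cover over its projection to `G`. Up to switching by the sign of the layers,
every edge of the cover has the sign of the edge of `G` below it, and its length exceeds the length
of that edge by one precisely when the edge of the cover is negative (an edge `v⁺v⁻` counts as
lying over a positive edge of length `0`). Hence a closed walk with `n` negative edges projects to a closed walk
of the same sign whose length is smaller by `n`, and `n` is odd precisely when the walk is negative.
Conversely every walk of `G` has a lift without negative edges; the lift of a positive closed walk
is closed, that of a negative one is closed up by a single edge `v⁺v⁻`.
-/

section Walks

variable {G : SimpleGraph V} {ω : V → V → ℤ} {a b c : V}

/-- The number of negative edges of a walk, counted with multiplicity. -/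
def negCount (ω : V → V → ℤ) (w : G.Walk a b) : ℕ :=
  w.darts.countP fun d => ω d.fst d.snd < 0

/-- The closed walk `w` has type `ij`, where `neg` and `odd` encode `i = 1` and `j = 1`. -/
def HasWalkType (ω : V → V → ℤ) (neg odd : Bool) (w : G.Walk a a) : Prop :=
  (walkSign ω w < 0 ↔ neg = true) ∧ (Odd (walkWLen ω w) ↔ odd = true)

@[simp]
lemma walkSign_nil : walkSign ω (Walk.nil : G.Walk a a) = 1 := rfl

@[simp]
lemma walkSign_cons (h : G.Adj a b) (w : G.Walk b c) :
    walkSign ω (Walk.cons h w) = ω a b * walkSign ω w := by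
  simp [walkSign]

@[simp]
lemma walkWLen_nil : walkWLen ω (Walk.nil : G.Walk a a) = 0 := rfl

@[simp]
lemma walkWLen_cons (h : G.Adj a b) (w : G.Walk b c) :
    walkWLen ω (Walk.cons h w) = (ω a b).natAbs + walkWLen ω w := by
  simp [walkWLen]

@[simp]
lemma negCount_nil : negCount ω (Walk.nil : G.Walk a a) = 0 := rfl

@[simp]
lemma negCount_cons (h : G.Adj a b) (w : G.Walk b c) :
    negCount ω (Walk.cons h w) = (if ω a b < 0 then 1 else 0) + negCount ω w := by
  simp [negCount, List.countP_cons, add_comm]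

lemma sign_walkSign (hnz : ∀ u v, G.Adj u v → ω u v ≠ 0) (w : G.Walk a b) :
    (walkSign ω w).sign = (-1) ^ negCount ω w := by
  induction w with
  | nil => simp
  | cons h w ih =>
    rw [walkSign_cons, negCount_cons, Int.sign_mul, ih, pow_add]
    rcases (hnz _ _ h).lt_or_gt with hneg | hpos
    · simp [hneg, Int.sign_eq_neg_one_of_neg hneg]
    · simp [hpos.not_gt, Int.sign_eq_one_of_pos hpos]

lemma odd_negCount_iff (hnz : ∀ u v, G.Adj u v → ω u v ≠ 0) (w : G.Walk a b) :
    Odd (negCount ω w) ↔ walkSign ω w < 0 := by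
  rw [← Int.sign_eq_neg_one_iff_neg, sign_walkSign hnz,
    neg_one_pow_eq_neg_one_iff_odd (by decide)]

lemma wGirth_le {neg odd : Bool} {w : G.Walk a a} (hw : HasWalkType ω neg odd w) :
    wGirth G ω neg odd ≤ walkWLen ω w :=
  sInf_le ⟨a, w, rfl, hw⟩

lemma wGirth_eq_wGirth_add {H : SimpleGraph W} {π : W → W → ℤ} {neg odd neg' odd' : Bool}
    (k : ℕ)
    (hle : ∀ (a : V) (p : G.Walk a a), HasWalkType ω neg odd p →
      ∃ (x : W) (w : H.Walk x x), HasWalkType π neg' odd' w ∧ walkWLen π w ≤ walkWLen ω p + k)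
    (hge : ∀ (x : W) (w : H.Walk x x), HasWalkType π neg' odd' w →
      ∃ (a : V) (p : G.Walk a a), HasWalkType ω neg odd p ∧ walkWLen ω p + k ≤ walkWLen π w) :
    wGirth H π neg' odd' = wGirth G ω neg odd + k := by
  apply le_antisymm
  · rw [wGirth.eq_def G, ENat.sInf_add]
    refine le_iInf₂ ?_
    rintro _ ⟨a, p, rfl, hp⟩
    obtain ⟨x, w, hw, hlen⟩ := hle a p hp
    exact (wGirth_le hw).trans (mod_cast hlen)
  · refine le_sInf ?_
    rintro _ ⟨x, w, rfl, hw⟩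
    obtain ⟨a, p, hp, hlen⟩ := hge x w hw
    calc wGirth G ω neg odd + k ≤ walkWLen ω p + k := by gcongr; exact wGirth_le hp
      _ ≤ walkWLen π w := mod_cast hlen

end Walks

section ExtendedDoubleCover

variable {G : SimpleGraph V} {ω : V → V → ℤ}

/-- The sign of a layer of the Extended Double Cover: `1` for the vertices `v⁺`, `-1` for the
vertices `v⁻`. It is the switching function relating the signs of the cover to those of `(G, ω)`. -/
def layerSign (i : Bool) : ℤ := if i then 1 else -1

lemma layerSign_mul_self (i : Bool) : layerSign i * layerSign i = 1 := by
  cases i <;> rfl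

lemma layerSign_eq_neg_of_ne {i j : Bool} (h : i ≠ j) : layerSign i = -layerSign j := by
  revert i j
  decide

lemma exists_layerSign_mul_sign_eq_one {n : ℤ} (hn : n ≠ 0) (i : Bool) :
    ∃ j, layerSign i * layerSign j * n.sign = 1 := by
  rcases hn.lt_or_gt with hneg | hpos
  · refine ⟨!i, ?_⟩
    cases i <;> simp [layerSign, Int.sign_eq_neg_one_of_neg hneg]
  · exact ⟨i, by rw [layerSign_mul_self, Int.sign_eq_one_of_pos hpos, one_mul]⟩

lemma EDCw_adj {x y : V × Bool} :
    (EDCw G).Adj x y ↔ (x.1 = y.1 ∧ x.2 ≠ y.2) ∨ G.Adj x.1 y.1 :=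
  Iff.rfl

lemma EDCwWeight_vertical (ω : V → V → ℤ) (v : V) (i j : Bool) :
    EDCwWeight ω (v, i) (v, j) = -1 := by
  simp [EDCwWeight]

lemma sign_EDCwWeight {u v : V} (huv : u ≠ v) (hω : ω u v ≠ 0) (i j : Bool) :
    (EDCwWeight ω (u, i) (v, j)).sign = layerSign i * layerSign j * (ω u v).sign := by
  rcases hω.lt_or_gt with hneg | hpos
  · have hsign := Int.sign_eq_neg_one_of_neg hneg
    cases i <;> cases j <;>
      grind [EDCwWeight, layerSign, Int.sign_eq_neg_one_iff_neg, Int.sign_eq_one_iff_pos]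
  · have hsign := Int.sign_eq_one_of_pos hpos
    cases i <;> cases j <;>
      grind [EDCwWeight, layerSign, Int.sign_eq_neg_one_iff_neg, Int.sign_eq_one_iff_pos]

lemma natAbs_EDCwWeight {u v : V} (huv : u ≠ v) (i j : Bool) :
    (EDCwWeight ω (u, i) (v, j)).natAbs =
      (ω u v).natAbs + if EDCwWeight ω (u, i) (v, j) < 0 then 1 else 0 := by
  simp only [EDCwWeight, huv, if_false]
  split_ifs <;> omega

lemma EDCwWeight_ne_zero (hnz : ∀ u v, G.Adj u v → ω u v ≠ 0) (x y : V × Bool)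
    (h : (EDCw G).Adj x y) : EDCwWeight ω x y ≠ 0 := by
  simp only [EDCwWeight]
  rcases EDCw_adj.1 h with ⟨hxy, -⟩ | h
  · simp [hxy]
  · have := hnz _ _ h
    split_ifs <;> omega

lemma exists_projection (hnz : ∀ u v, G.Adj u v → ω u v ≠ 0) {x y : V × Bool}
    (w : (EDCw G).Walk x y) :
    ∃ p : G.Walk x.1 y.1,
      (walkSign (EDCwWeight ω) w).sign
        = layerSign x.2 * layerSign y.2 * (walkSign ω p).sign ∧
      walkWLen (EDCwWeight ω) w = walkWLen ω p + negCount (EDCwWeight ω) w := by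
  induction w with
  | nil => exact ⟨Walk.nil, by simp [layerSign_mul_self], by simp⟩
  | @cons x z y h w ih =>
    obtain ⟨p, hsign, hlen⟩ := ih
    obtain ⟨u, i⟩ := x
    obtain ⟨v, k⟩ := z
    dsimp only at p hsign
    rw [walkSign_cons, Int.sign_mul, hsign, walkWLen_cons, hlen, negCount_cons]
    rcases EDCw_adj.1 h with ⟨rfl : u = v, hik : i ≠ k⟩ | (huv : G.Adj u v)
    · refine ⟨p, ?_, ?_⟩
      · rw [EDCwWeight_vertical, layerSign_eq_neg_of_ne hik, Int.sign_neg, Int.sign_one]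
        ring
      · rw [EDCwWeight_vertical, Int.natAbs_neg, Int.natAbs_one, if_pos (by decide)]
        omega
    · refine ⟨Walk.cons huv p, ?_, ?_⟩
      · rw [walkSign_cons, Int.sign_mul, sign_EDCwWeight huv.ne (hnz _ _ huv)]
        linear_combination layerSign i * (ω u v).sign * layerSign y.2 * (walkSign ω p).sign *
          layerSign_mul_self k
      · dsimp only
        rw [walkWLen_cons, natAbs_EDCwWeight huv.ne]
        ring

lemma exists_closed_projection (hnz : ∀ u v, G.Adj u v → ω u v ≠ 0) {x : V × Bool}
    (w : (EDCw G).Walk x x) :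
    ∃ p : G.Walk x.1 x.1,
      (walkSign ω p < 0 ↔ walkSign (EDCwWeight ω) w < 0) ∧
      walkWLen (EDCwWeight ω) w = walkWLen ω p + negCount (EDCwWeight ω) w := by
  obtain ⟨p, hsign, hlen⟩ := exists_projection hnz w
  rw [layerSign_mul_self, one_mul] at hsign
  exact ⟨p, by rw [← Int.sign_eq_neg_one_iff_neg, ← hsign, Int.sign_eq_neg_one_iff_neg], hlen⟩

lemma exists_positive_lift (hnz : ∀ u v, G.Adj u v → ω u v ≠ 0) {a b : V} (p : G.Walk a b)
    (i : Bool) :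
    ∃ j, layerSign i * layerSign j * (walkSign ω p).sign = 1 ∧
      ∃ w : (EDCw G).Walk (a, i) (b, j),
        0 < walkSign (EDCwWeight ω) w ∧ walkWLen (EDCwWeight ω) w = walkWLen ω p := by
  induction p generalizing i with
  | nil => exact ⟨i, by simp [layerSign_mul_self], Walk.nil, by simp⟩
  | @cons u v b huv p ih =>
    obtain ⟨k, hik⟩ := exists_layerSign_mul_sign_eq_one (hnz _ _ huv) i
    obtain ⟨j, hkj, w, hpos, hlen⟩ := ih k
    have hadj : (EDCw G).Adj (u, i) (v, k) := EDCw_adj.2 (Or.inr huv)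
    have hedge : 0 < EDCwWeight ω (u, i) (v, k) := by
      rwa [← Int.sign_eq_one_iff_pos, sign_EDCwWeight huv.ne (hnz _ _ huv)]
    refine ⟨j, ?_, Walk.cons hadj w, ?_, ?_⟩
    · calc layerSign i * layerSign j * (walkSign ω (Walk.cons huv p)).sign
          = layerSign i * layerSign k * (ω u v).sign *
              (layerSign k * layerSign j * (walkSign ω p).sign) := by
            rw [walkSign_cons, Int.sign_mul]
            linear_combination -(layerSign i * (ω u v).sign * layerSign j *
              (walkSign ω p).sign * layerSign_mul_self k)
        _ = 1 := by rw [hik, hkj, one_mul]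
    · rw [walkSign_cons]
      exact mul_pos hedge hpos
    · rw [walkWLen_cons, walkWLen_cons, natAbs_EDCwWeight huv.ne, if_neg hedge.not_gt, hlen,
        add_zero]

lemma exists_closed_lift_of_nonneg (hnz : ∀ u v, G.Adj u v → ω u v ≠ 0) {a : V}
    {p : G.Walk a a} (hp : 0 ≤ walkSign ω p) (i : Bool) :
    ∃ w : (EDCw G).Walk (a, i) (a, i),
      0 < walkSign (EDCwWeight ω) w ∧ walkWLen (EDCwWeight ω) w = walkWLen ω p := by
  obtain ⟨j, hj, w, hw⟩ := exists_positive_lift hnz p i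
  obtain rfl : i = j := by
    by_contra hij
    have hsign : (walkSign ω p).sign = -1 := by
      rw [layerSign_eq_neg_of_ne hij, neg_mul, layerSign_mul_self] at hj
      omega
    exact hp.not_gt (Int.sign_eq_neg_one_iff_neg.1 hsign)
  exact ⟨w, hw⟩

lemma exists_closed_lift_of_neg (hnz : ∀ u v, G.Adj u v → ω u v ≠ 0) {a : V}
    {p : G.Walk a a} (hp : walkSign ω p < 0) (i : Bool) :
    ∃ w : (EDCw G).Walk (a, i) (a, i),
      walkSign (EDCwWeight ω) w < 0 ∧ walkWLen (EDCwWeight ω) w = walkWLen ω p + 1 := by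
  obtain ⟨j, hj, w, hpos, hlen⟩ := exists_positive_lift hnz p (!i)
  have hj_ne : j ≠ !i := by
    rintro rfl
    rw [layerSign_mul_self, one_mul, Int.sign_eq_one_iff_pos] at hj
    exact hp.not_gt hj
  obtain rfl : j = i := Bool.ne_not.1 hj_ne
  have hadj : (EDCw G).Adj (a, j) (a, !j) := EDCw_adj.2 (Or.inl ⟨rfl, by simp⟩)
  refine ⟨Walk.cons hadj w, ?_, ?_⟩
  · rwa [walkSign_cons, EDCwWeight_vertical, neg_one_mul, neg_lt_zero]
  · rw [walkWLen_cons, EDCwWeight_vertical, hlen, Int.natAbs_neg, Int.natAbs_one, add_comm]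

lemma wGirth_EDCw_false (hnz : ∀ u v, G.Adj u v → ω u v ≠ 0) (odd : Bool) :
    wGirth (EDCw G) (EDCwWeight ω) false odd = wGirth G ω false odd := by
  suffices h : wGirth (EDCw G) (EDCwWeight ω) false odd = wGirth G ω false odd + (0 : ℕ) by
    simpa using h
  refine wGirth_eq_wGirth_add 0 ?_ ?_
  · rintro a p ⟨hsign, hodd⟩
    obtain ⟨w, hpos, hlen⟩ := exists_closed_lift_of_nonneg hnz (p := p) (by simpa using hsign) true
    exact ⟨_, w, ⟨by simpa using hpos.le, by rwa [hlen]⟩, hlen.le⟩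
  · rintro x w ⟨hsign, hodd⟩
    obtain ⟨p, hp, hlen⟩ := exists_closed_projection hnz w
    have heven : Even (negCount (EDCwWeight ω) w) := by
      simp [← Nat.not_odd_iff_even, odd_negCount_iff (EDCwWeight_ne_zero hnz), hsign]
    refine ⟨_, p, ⟨hp.trans hsign, ?_⟩, by omega⟩
    rw [← hodd, hlen, Nat.odd_add, iff_true_right heven]

lemma wGirth_EDCw_true (hnz : ∀ u v, G.Adj u v → ω u v ≠ 0) (odd : Bool) :
    wGirth (EDCw G) (EDCwWeight ω) true odd = wGirth G ω true (!odd) + 1 := by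
  refine mod_cast wGirth_eq_wGirth_add 1 ?_ ?_
  · rintro a p ⟨hsign, hodd⟩
    obtain ⟨w, hneg, hlen⟩ := exists_closed_lift_of_neg hnz (hsign.2 rfl) true
    refine ⟨_, w, ⟨iff_of_true hneg rfl, ?_⟩, hlen.le⟩
    rw [hlen, Nat.odd_add_one, hodd]
    simp
  · rintro x w ⟨hsign, hodd⟩
    obtain ⟨p, hp, hlen⟩ := exists_closed_projection hnz w
    have hcount : Odd (negCount (EDCwWeight ω) w) :=
      (odd_negCount_iff (EDCwWeight_ne_zero hnz) w).2 (hsign.2 rfl)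
    refine ⟨_, p, ⟨hp.trans hsign, ?_⟩, ?_⟩
    · have hparity : Odd (walkWLen ω p) ↔ ¬Odd (walkWLen (EDCwWeight ω) w) := by
        rw [hlen, Nat.odd_add, ← Nat.not_odd_iff_even]
        tauto
      rw [hparity, hodd]
      simp
    · have := hcount.pos
      omega

theorem girth_EDC_weighted_general (hnz : ∀ u v, G.Adj u v → ω u v ≠ 0) (odd : Bool) :
    wGirth (EDCw G) (EDCwWeight ω) false odd = wGirth G ω false odd ∧
    wGirth (EDCw G) (EDCwWeight ω) true odd = wGirth G ω true (!odd) + 1 :=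
  ⟨wGirth_EDCw_false hnz odd, wGirth_EDCw_true hnz odd⟩

end ExtendedDoubleCover

/-- the walk-girths of the Extended Double Cover of a weighted
signed graph `(G,ω)`: `g₀₁(EDC(G,ω)) = g₀₁(G,ω)`, `g₁₀(EDC(G,ω)) = g₁₁(G,ω) + 1`
and `g₁₁(EDC(G,ω)) = g₁₀(G,ω) + 1` (in `ℕ∞`, so `∞ + 1 = ∞`). -/
theorem girth_EDC_weighted {V : Type*} [Fintype V]
    (G : SimpleGraph V) (ω : V → V → ℤ)
    (hsymm : ∀ u v, ω u v = ω v u) (hnz : ∀ u v, G.Adj u v → ω u v ≠ 0) :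
    wGirth (EDCw G) (EDCwWeight ω) false true = wGirth G ω false true ∧
    wGirth (EDCw G) (EDCwWeight ω) true false = wGirth G ω true true + 1 ∧
    wGirth (EDCw G) (EDCwWeight ω) true true = wGirth G ω true false + 1 :=
  ⟨(girth_EDC_weighted_general hnz true).1, (girth_EDC_weighted_general hnz false).2,
    (girth_EDC_weighted_general hnz true).2⟩

end SignedPaper
end

section
/- Let g ≥ 3 be an integer, let a = ⌊g/2⌋ and b = ⌈g/2⌉, let u = (i,j) be a vertex of the cylinder T(g) with 0 ≤ i < 2a and 0 ≤ j < b, and let t be an integer with 1 ≤ t ≤ g − 1. Then d_{T(g)}((0,0),(i,j)) = t if and only if either (i ≤ a and i + j = t) or (i > a and i − j = 2a − t). -/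
open SimpleGraph

namespace SignedPaper

variable {V : Type*} {W : Type*}

/-!
The cylinder is the box product of a cycle and a path, so its distance is the sum of the distances
of the two factors. Along the path this is `|j - j'|`. Along a cycle of length `n` one can go
directly or across the edge joining `n - 1` and `0`, which gives `min |i - i'| (n - |i - i'|)`; no
walk is shorter, because this expression changes by at most one along each edge. From the origin
the minimum over a cycle of length `2a` is `i` for `i ≤ a` and `2a - i` for `i > a`.
-/

lemma le_add_dist_of_adj_le_add_one {G : SimpleGraph V} {f : V → ℕ}
    (hf : ∀ ⦃v w⦄, G.Adj v w → f w ≤ f v + 1) {u v : V} (h : G.Reachable u v) :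
    f v ≤ f u + G.dist u v := by
  obtain ⟨p, hp⟩ := h.exists_walk_length_eq_dist
  rw [← hp]
  clear hp
  induction p with
  | nil => simp
  | cons hadj p ih =>
    have := hf hadj
    have := ih p.reachable
    rw [Walk.length_cons]
    omega

lemma dist_boxProd {G : SimpleGraph V} {H : SimpleGraph W} (hG : G.Preconnected)
    (hH : H.Preconnected) (x y : V × W) :
    (G □ H).dist x y = G.dist x.1 y.1 + H.dist x.2 y.2 := by
  have h := edist_boxProd (G := G) (H := H) x y
  rw [← (hG.boxProd hH x y).coe_dist_eq_edist, ← (hG _ _).coe_dist_eq_edist,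
    ← (hH _ _).coe_dist_eq_edist] at h
  exact_mod_cast h

section Path

variable {n : ℕ}

lemma pathGraph_adj_iff_natAbs_sub_eq_one {i j : Fin n} :
    (pathGraph n).Adj i j ↔ ((i.val : ℤ) - (j.val : ℤ)).natAbs = 1 := by
  rw [pathGraph_adj]
  omega

lemma dist_pathGraph_le_of_val_add_eq (k : ℕ) {i j : Fin n} (h : i.val + k = j.val) :
    (pathGraph n).dist i j ≤ k := by
  induction k generalizing j with
  | zero => simp [Fin.ext h]
  | succ k ih =>
    let m : Fin n := ⟨i.val + k, by omega⟩
    have hmj : (pathGraph n).dist m j = 1 := by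
      rw [dist_eq_one_iff_adj, pathGraph_adj]
      exact Or.inl h
    calc (pathGraph n).dist i j
        ≤ (pathGraph n).dist i m + (pathGraph n).dist m j :=
          (pathGraph_preconnected n i m).dist_triangle_left j
      _ ≤ k + 1 := by rw [hmj]; gcongr; exact ih rfl

lemma dist_pathGraph (i j : Fin n) :
    (pathGraph n).dist i j = ((i.val : ℤ) - (j.val : ℤ)).natAbs := by
  apply le_antisymm
  · rcases le_total i j with h | h
    · exact dist_pathGraph_le_of_val_add_eq _ (by omega)
    · rw [dist_comm]
      exact dist_pathGraph_le_of_val_add_eq _ (by omega)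
  · have hf : ∀ ⦃k l : Fin n⦄, (pathGraph n).Adj k l →
        ((i.val : ℤ) - (l.val : ℤ)).natAbs ≤ ((i.val : ℤ) - (k.val : ℤ)).natAbs + 1 := by
      intro k l hkl
      rw [pathGraph_adj] at hkl
      omega
    simpa using le_add_dist_of_adj_le_add_one hf (pathGraph_preconnected n i j)

end Path

section Cycle

variable {n : ℕ}

/-- The length of the shorter of the two arcs between `i` and `j` on a cycle of length `n` with
vertices numbered consecutively. -/
def cycleDist (i j : Fin n) : ℕ :=
  min ((i.val : ℤ) - (j.val : ℤ)).natAbs (n - ((i.val : ℤ) - (j.val : ℤ)).natAbs)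

lemma cycleDist_self (i : Fin n) : cycleDist i i = 0 := by
  simp [cycleDist]

lemma cycleDist_triangle (i j k : Fin n) : cycleDist i k ≤ cycleDist i j + cycleDist j k := by
  unfold cycleDist
  omega

lemma cycleGraph_adj_iff_cycleDist_eq_one {i j : Fin n} :
    (cycleGraph n).Adj i j ↔ cycleDist i j = 1 := by
  rw [cycleGraph_adj', cycleDist]
  rcases lt_trichotomy i j with h | rfl | h
  · rw [Fin.coe_sub_iff_lt.2 h, Fin.coe_sub_iff_le.2 h.le]
    omega
  · simp [Fin.coe_sub_iff_le.2 le_rfl]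
  · rw [Fin.coe_sub_iff_lt.2 h, Fin.coe_sub_iff_le.2 h.le]
    omega

lemma dist_cycleGraph_le_natAbs_sub (i j : Fin n) :
    (cycleGraph n).dist i j ≤ ((i.val : ℤ) - (j.val : ℤ)).natAbs := by
  rw [← dist_pathGraph]
  exact (pathGraph_preconnected n i j).dist_anti pathGraph_le_cycleGraph

lemma dist_cycleGraph_le_sub_sub {i j : Fin n} (h : i < j) :
    (cycleGraph n).dist i j ≤ n - (j.val - i.val) := by
  let first : Fin n := ⟨0, i.pos⟩
  let last : Fin n := ⟨n - 1, Nat.sub_one_lt_of_lt i.pos⟩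
  have h_edge : (cycleGraph n).dist first last = 1 := by
    rw [dist_eq_one_iff_adj, cycleGraph_adj_iff_cycleDist_eq_one, cycleDist]
    simp only [first, last]
    omega
  calc (cycleGraph n).dist i j
      ≤ (cycleGraph n).dist i first + (cycleGraph n).dist first j :=
        (cycleGraph_preconnected i first).dist_triangle_left j
    _ ≤ (cycleGraph n).dist i first +
          ((cycleGraph n).dist first last + (cycleGraph n).dist last j) := by
        gcongr
        exact (cycleGraph_preconnected first last).dist_triangle_left j
    _ ≤ i.val + (1 + (n - 1 - j.val)) := by
        rw [h_edge]
        gcongr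
        · exact (dist_cycleGraph_le_natAbs_sub i first).trans_eq (by simp only [first]; omega)
        · exact (dist_cycleGraph_le_natAbs_sub last j).trans_eq (by simp only [last]; omega)
    _ = n - (j.val - i.val) := by omega

lemma dist_cycleGraph_le_cycleDist (i j : Fin n) : (cycleGraph n).dist i j ≤ cycleDist i j := by
  rcases lt_trichotomy i j with h | rfl | h
  · have := dist_cycleGraph_le_sub_sub h
    exact le_min (dist_cycleGraph_le_natAbs_sub i j) (by omega)
  · simp
  · have := dist_cycleGraph_le_sub_sub h
    rw [dist_comm] at this
    exact le_min (dist_cycleGraph_le_natAbs_sub i j) (by omega)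

lemma dist_cycleGraph (i j : Fin n) : (cycleGraph n).dist i j = cycleDist i j := by
  apply le_antisymm (dist_cycleGraph_le_cycleDist i j)
  have hf : ∀ ⦃k l⦄, (cycleGraph n).Adj k l → cycleDist i l ≤ cycleDist i k + 1 := by
    intro k l hkl
    rw [← cycleGraph_adj_iff_cycleDist_eq_one.1 hkl]
    exact cycleDist_triangle i k l
  simpa [cycleDist_self] using le_add_dist_of_adj_le_add_one hf (cycleGraph_preconnected i j)

end Cycle

section Cylinder

variable {a b : ℕ}

lemma cylT_eq_boxProd (a b : ℕ) : cylT a b = cycleGraph (2 * a) □ pathGraph b := by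
  ext x y
  rw [boxProd_adj, cycleGraph_adj_iff_cycleDist_eq_one, pathGraph_adj_iff_natAbs_sub_eq_one]
  simp only [cylT, cycleDist]
  omega

lemma dist_cylT (x y : Fin (2 * a) × Fin b) :
    (cylT a b).dist x y =
      cycleDist x.1 y.1 + ((x.2.val : ℤ) - (y.2.val : ℤ)).natAbs := by
  rw [cylT_eq_boxProd, dist_boxProd cycleGraph_preconnected (pathGraph_preconnected b),
    dist_cycleGraph, dist_pathGraph]

theorem cyl_dist_from_origin_general (u : Fin (2 * a) × Fin b) (t : ℕ) :
    (cylT a b).dist (⟨0, u.1.pos⟩, ⟨0, u.2.pos⟩) u = t ↔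
      ((u.1.val ≤ a ∧ u.1.val + u.2.val = t) ∨
       (a < u.1.val ∧ (u.1.val : ℤ) - (u.2.val : ℤ) = ((2 * a : ℕ) : ℤ) - (t : ℤ))) := by
  rw [dist_cylT]
  simp only [cycleDist]
  omega

end Cylinder

/-- characterization of vertices of `T(g)` at distance `t` from the
origin `(0,0)`, for `1 ≤ t ≤ g−1`: `d((0,0),(i,j)) = t` iff either `i ≤ a` and
`i + j = t`, or `i > a` and `i − j = 2a − t`. -/
theorem cyl_dist_from_origin (g : ℕ) (hg : 3 ≤ g)
    (u : Fin (2 * (g / 2)) × Fin ((g + 1) / 2)) (t : ℕ) (ht1 : 1 ≤ t) (ht2 : t ≤ g - 1) :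
    (cylT (g / 2) ((g + 1) / 2)).dist (⟨0, by omega⟩, ⟨0, by omega⟩) u = t ↔
      ((u.1.val ≤ g / 2 ∧ u.1.val + u.2.val = t) ∨
       (g / 2 < u.1.val ∧ (u.1.val : ℤ) - (u.2.val : ℤ) = ((2 * (g / 2) : ℕ) : ℤ) - (t : ℤ))) := by
  exact cyl_dist_from_origin_general u t

end SignedPaper
end
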